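/- arXiv:1903.05340 — 4 statements merged into one kernel-verified Lean document; each statement's English description precedes it below -/
import Mathlib

section
/- Let N ∈ {1,2,3} and let λ₁, λ₂ > 0 with λ₁ ≠ λ₂. Let w₁, w₂ : ℝ^N → ℝ be continuous functions with radial decay of rates √λ₁ and √λ₂ respectively. Then there exist constants c, C, R₀ > 0 such that for all R ≥ R₀, c·R^{1−N}·e^{−2·min(√λ₁,√λ₂)·R} ≤ ∫_{ℝ^N} w₁(x)²·w₂(x − R·e₁)² dx ≤ C·R^{1−N}·e^{−2·min(√λ₁,√λ₂)·R}. -/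
/-!
Put `W r a x = (1 + ‖x‖) ^ r * exp (a * ‖x‖)`. Being continuous and positive, `wᵢ ^ 2` is comparable
on the whole space, and not only near infinity, to `W (-s) (-aᵢ)`, where `s = N - 1` and
`aᵢ = 2 * √lamᵢ`. For `0 ≤ r, a` the weight is submultiplicative, so
`W (-s) (-a) v * W (-s) (-a) y ≤ W (-s) (-a) (y + v) ≤ W (-s) (-a) v * W s a y`.
If `a₁ < a₂`, multiplying by `W (-s) (-a₂) y` and integrating in `y` traps the interaction integral
between two multiples of `W (-s) (-a₁) v`, uniformly in the shift `v`: the factor left in the upper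
bound is `W 0 (a₁ - a₂)`, which is integrable precisely because the rates differ. The case
`a₂ < a₁` follows by translating the integral, and `v = R • e₁` gives the theorem.
-/

open MeasureTheory Real

/-- A continuous function `w : ℝ^N → ℝ` has radial decay of rate `√lam`:
`w` is everywhere positive and there are `M, c, C > 0` with
`c‖x‖^{-(N-1)/2} e^{-√lam ‖x‖} ≤ w x ≤ C‖x‖^{-(N-1)/2} e^{-√lam ‖x‖}` for `‖x‖ ≥ M`. -/
def HasRadialDecay {N : ℕ} (w : EuclideanSpace ℝ (Fin N) → ℝ) (lam : ℝ) : Prop :=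
  (∀ x, 0 < w x) ∧
  ∃ M c C : ℝ, 0 < M ∧ 0 < c ∧ 0 < C ∧
    ∀ x : EuclideanSpace ℝ (Fin N), M ≤ ‖x‖ →
      c * ‖x‖ ^ (-((N : ℝ) - 1) / 2) * Real.exp (-Real.sqrt lam * ‖x‖) ≤ w x ∧
      w x ≤ C * ‖x‖ ^ (-((N : ℝ) - 1) / 2) * Real.exp (-Real.sqrt lam * ‖x‖)

section

open Asymptotics Bornology Filter Function

section Asymptotics

lemma isTheta_comp_tendsto {α β E F : Type*} [Norm E] [Norm F] {f : α → E} {g : α → F}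
    {l : Filter α} {l' : Filter β} {k : β → α} (h : f =Θ[l] g) (hk : Tendsto k l' l) :
    (fun x => f (k x)) =Θ[l'] fun x => g (k x) :=
  ⟨h.1.comp_tendsto hk, h.2.comp_tendsto hk⟩

lemma isBigO_top_of_isBigO_cocompact {X E F : Type*} [TopologicalSpace X]
    [SeminormedAddCommGroup E] [NormedAddCommGroup F] {f : X → E} {g : X → F}
    (hf : Continuous f) (hg : Continuous g) (hg0 : ∀ x, g x ≠ 0) (h : f =O[cocompact X] g) :
    f =O[⊤] g := by
  obtain ⟨C, hC⟩ := h.bound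
  obtain ⟨K, hK, hKC⟩ := mem_cocompact'.1 hC
  have on_compact : f =O[𝓟 K] g :=
    (hf.continuousOn.isBigO_principal hK (c := (1 : ℝ)) (by simp)).trans
      (hg.continuousOn.isBigO_rev_principal hK (fun x _ => hg0 x) 1)
  have off_compact : f =O[𝓟 Kᶜ] g :=
    isBigO_principal.2 ⟨C, fun x hx => by_contra fun hxC => hx (hKC hxC)⟩
  simpa only [sup_principal, Set.union_compl_self, principal_univ] using
    on_compact.sup off_compact

lemma isTheta_top_of_isTheta_cocompact {X E F : Type*} [TopologicalSpace X]
    [NormedAddCommGroup E] [NormedAddCommGroup F] {f : X → E} {g : X → F}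
    (hf : Continuous f) (hg : Continuous g) (hf0 : ∀ x, f x ≠ 0) (hg0 : ∀ x, g x ≠ 0)
    (h : f =Θ[cocompact X] g) : f =Θ[⊤] g :=
  ⟨isBigO_top_of_isBigO_cocompact hf hg hg0 h.1, isBigO_top_of_isBigO_cocompact hg hf hf0 h.2⟩

lemma isBigO_top_integral {α β E : Type*} [MeasurableSpace β] {μ : Measure β}
    [NormedAddCommGroup E] [NormedSpace ℝ E] {F : α → β → E} {H : α → β → ℝ}
    (hFH : uncurry F =O[⊤] uncurry H) (hH0 : ∀ a b, 0 ≤ H a b)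
    (hH : ∀ a, Integrable (H a) μ) :
    (fun a => ∫ b, F a b ∂μ) =O[⊤] fun a => ∫ b, H a b ∂μ := by
  obtain ⟨C, hC⟩ := isBigO_top.1 hFH
  refine isBigO_top.2 ⟨C, fun a => ?_⟩
  calc ‖∫ b, F a b ∂μ‖ ≤ ∫ b, C * H a b ∂μ :=
        norm_integral_le_of_norm_le ((hH a).const_mul C) <| ae_of_all _ fun b => by
          simpa only [uncurry_apply_pair, Real.norm_of_nonneg (hH0 a b)] using hC (a, b)
    _ = C * ‖∫ b, H a b ∂μ‖ := by
        rw [integral_const_mul, Real.norm_of_nonneg (integral_nonneg (hH0 a))]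

lemma isBigO_top_uncurry_of_le {α β : Type*} {F H : α → β → ℝ} (hF : ∀ a b, 0 ≤ F a b)
    (hFH : ∀ a b, F a b ≤ H a b) : uncurry F =O[⊤] uncurry H :=
  isBigO_of_le ⊤ fun p => by
    simpa only [uncurry, Real.norm_of_nonneg (hF p.1 p.2),
      Real.norm_of_nonneg ((hF p.1 p.2).trans (hFH p.1 p.2))] using hFH p.1 p.2

lemma exists_pos_bounds_of_isTheta_atTop {f g : ℝ → ℝ} (hf : 0 ≤ᶠ[atTop] f)
    (hg : 0 ≤ᶠ[atTop] g) (h : f =Θ[atTop] g) :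
    ∃ c C R₀ : ℝ, 0 < c ∧ 0 < C ∧ 0 < R₀ ∧ ∀ R, R₀ ≤ R → c * g R ≤ f R ∧ f R ≤ C * g R := by
  obtain ⟨C, hC, upper⟩ := h.1.exists_pos
  obtain ⟨c, hc, lower⟩ := h.2.exists_pos
  obtain ⟨R₀, hR₀⟩ := eventually_atTop.1 (hf.and (hg.and (upper.bound.and lower.bound)))
  refine ⟨c⁻¹, C, max R₀ 1, inv_pos.2 hc, hC, by positivity, fun R hR => ?_⟩
  obtain ⟨hfR, hgR, hupper, hlower⟩ := hR₀ R (le_of_max_le_left hR)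
  rw [Real.norm_of_nonneg hfR, Real.norm_of_nonneg hgR] at hupper hlower
  exact ⟨(inv_mul_le_iff₀ hc).2 hlower, hupper⟩

end Asymptotics

section RadialWeight

variable {E : Type*} [NormedAddCommGroup E]

/-- The weight `(1 + ‖x‖) ^ r * exp (a * ‖x‖)`, against which growth (`0 ≤ r, a`) and decay
(`r, a ≤ 0`) on `E` are measured. The shift by `1` keeps it continuous and positive at the origin
for every real `r`. -/
noncomputable def radialWeight (r a : ℝ) (x : E) : ℝ :=
  (1 + ‖x‖) ^ r * exp (a * ‖x‖)

namespace radialWeight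

lemma pos (r a : ℝ) (x : E) : 0 < radialWeight r a x := by
  unfold radialWeight; positivity

lemma nonneg (r a : ℝ) (x : E) : 0 ≤ radialWeight r a x := (pos r a x).le

lemma continuous (r a : ℝ) : Continuous (radialWeight r a : E → ℝ) :=
  ((continuous_const.add continuous_norm).rpow_const fun x =>
    Or.inl (by positivity : 1 + ‖x‖ ≠ 0)).mul (by fun_prop)

lemma apply_neg (r a : ℝ) (x : E) : radialWeight r a (-x) = radialWeight r a x := by
  simp only [radialWeight, norm_neg]

lemma zero_right (r : ℝ) : (radialWeight r 0 : E → ℝ) = fun x => (1 + ‖x‖) ^ r := by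
  funext x
  simp only [radialWeight, zero_mul, exp_zero, mul_one]

lemma mul_apply (r a s b : ℝ) (x : E) :
    radialWeight r a x * radialWeight s b x = radialWeight (r + s) (a + b) x := by
  simp only [radialWeight, rpow_add (by positivity : 0 < 1 + ‖x‖), add_mul, exp_add]
  ring

lemma neg_neg_apply (r a : ℝ) (x : E) :
    radialWeight (-r) (-a) x = (radialWeight r a x)⁻¹ := by
  simp only [radialWeight, rpow_neg (by positivity : 0 ≤ 1 + ‖x‖), neg_mul, exp_neg, mul_inv]

lemma add_le_mul {r a : ℝ} (hr : 0 ≤ r) (ha : 0 ≤ a) (x y : E) :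
    radialWeight r a (x + y) ≤ radialWeight r a x * radialWeight r a y := by
  have base_le : 1 + ‖x + y‖ ≤ (1 + ‖x‖) * (1 + ‖y‖) := by
    nlinarith [norm_add_le x y, norm_nonneg x, norm_nonneg y]
  calc radialWeight r a (x + y)
      ≤ ((1 + ‖x‖) * (1 + ‖y‖)) ^ r * exp (a * (‖x‖ + ‖y‖)) := by
        unfold radialWeight
        gcongr
        exact norm_add_le x y
    _ = radialWeight r a x * radialWeight r a y := by
        rw [mul_rpow (by positivity) (by positivity), mul_add, exp_add]
        unfold radialWeight
        ring

lemma le_neg_neg_add_mul {r a : ℝ} (hr : 0 ≤ r) (ha : 0 ≤ a) (s b : ℝ) (x y : E) :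
    radialWeight (-r) (-a) x * radialWeight (-r + s) (-a + b) y ≤
      radialWeight (-r) (-a) (x + y) * radialWeight s b y := by
  rw [← mul_apply, ← mul_assoc]
  refine mul_le_mul_of_nonneg_right ?_ (nonneg s b y)
  simp only [neg_neg_apply, ← mul_inv]
  exact inv_anti₀ (pos r a _) (add_le_mul hr ha x y)

lemma neg_neg_add_mul_le {r a : ℝ} (hr : 0 ≤ r) (ha : 0 ≤ a) (s b : ℝ) (x y : E) :
    radialWeight (-r) (-a) (x + y) * radialWeight s b y ≤
      radialWeight (-r) (-a) x * radialWeight (r + s) (a + b) y := by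
  have shift_back := add_le_mul hr ha (x + y) (-y)
  rw [add_neg_cancel_right, apply_neg] at shift_back
  rw [← mul_apply, ← mul_assoc]
  refine mul_le_mul_of_nonneg_right ?_ (nonneg s b y)
  rwa [neg_neg_apply, neg_neg_apply, inv_mul_eq_div, inv_le_iff_one_le_mul₀' (pos r a _),
    mul_div_assoc', one_le_div₀ (pos r a x)]

lemma isTheta_cobounded (r a : ℝ) :
    (radialWeight r a : E → ℝ) =Θ[cobounded E] fun x => ‖x‖ ^ r * exp (a * ‖x‖) := by
  have base : (fun t : ℝ => 1 + t) =Θ[atTop] fun t => t :=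
    (isLittleO_const_id_atTop (1 : ℝ)).right_isTheta_add.symm
  have rpow : (fun t : ℝ => (1 + t) ^ r) =Θ[atTop] fun t => t ^ r :=
    base.rpow ((eventually_ge_atTop 0).mono fun t (ht : 0 ≤ t) => add_nonneg zero_le_one ht)
      (eventually_ge_atTop 0)
  exact (isTheta_comp_tendsto rpow tendsto_norm_cobounded_atTop).mul isTheta_rfl

lemma isTheta_atTop_smul [NormedSpace ℝ E] (r a : ℝ) {e : E} (he : ‖e‖ = 1) :
    (fun R : ℝ => radialWeight r a (R • e)) =Θ[atTop] fun R => R ^ r * exp (a * R) := by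
  have norm_smul_e : ∀ᶠ R : ℝ in atTop, ‖R • e‖ = R :=
    (eventually_ge_atTop 0).mono fun R hR => by
      rw [norm_smul, he, mul_one, Real.norm_of_nonneg hR]
  have tendsto_ray : Tendsto (fun R : ℝ => R • e) atTop (cobounded E) :=
    tendsto_norm_atTop_iff_cobounded.1 (tendsto_id.congr' (norm_smul_e.mono fun R hR => hR.symm))
  exact (isTheta_comp_tendsto (isTheta_cobounded r a) tendsto_ray).trans_eventuallyEq
    (norm_smul_e.mono fun R hR => by simp only [hR])

section Measure

variable [NormedSpace ℝ E] [FiniteDimensional ℝ E] [MeasurableSpace E] [BorelSpace E]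
  {μ : Measure E} [μ.IsAddHaarMeasure]

lemma integrable (r : ℝ) {a : ℝ} (ha : a < 0) : Integrable (radialWeight r a : E → ℝ) μ := by
  set q : ℝ := Module.finrank ℝ E + 1
  have decay : (fun t : ℝ => t ^ r * exp (a * t)) =O[atTop] fun t => t ^ (-q) := by
    have exp_decay := (isLittleO_exp_neg_mul_rpow_atTop (neg_pos.2 ha) (-q - r)).isBigO
    refine ((isBigO_refl (fun t : ℝ => t ^ r) atTop).mul exp_decay).congr' ?_ ?_
    · simp only [neg_neg, EventuallyEq.rfl]
    · filter_upwards [eventually_gt_atTop 0] with t ht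
      rw [← rpow_add ht, add_sub_cancel]
  have isBigO_cobounded : (radialWeight r a : E → ℝ) =O[cobounded E] radialWeight (-q) 0 := by
    refine (isTheta_cobounded r a).isBigO.trans <|
      (decay.comp_tendsto tendsto_norm_cobounded_atTop).trans ?_
    simpa only [Function.comp_def, zero_mul, exp_zero, mul_one] using
      (isTheta_cobounded (E := E) (-q) 0).isBigO_symm
  have integrable_bound : Integrable (radialWeight (-q) 0 : E → ℝ) μ := by
    simpa only [zero_right] using
      integrable_one_add_norm (μ := μ) (lt_add_one (Module.finrank ℝ E : ℝ))
  rw [Metric.cobounded_eq_cocompact] at isBigO_cobounded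
  exact (continuous r a).locallyIntegrable.integrable_of_isBigO_cocompact isBigO_cobounded
    (integrable_bound.integrableAtFilter _)

lemma integral_pos (r : ℝ) {a : ℝ} (ha : a < 0) : 0 < ∫ x : E, radialWeight r a x ∂μ := by
  rw [integral_pos_iff_support_of_nonneg (nonneg r a) (integrable r ha),
    support_eq_univ fun x => (pos r a x).ne']
  exact Measure.measure_univ_pos.2 (NeZero.ne μ)

end Measure

end radialWeight

end RadialWeight

section Interaction

variable {E : Type*} [NormedAddCommGroup E] [NormedSpace ℝ E] [FiniteDimensional ℝ E]
  [MeasurableSpace E] [BorelSpace E] {μ : Measure E} [μ.IsAddHaarMeasure]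
  {f g : E → ℝ} {s t a b : ℝ}

lemma isTheta_integral_radialWeight_mul (r c s : ℝ) (ha : a < 0) :
    (fun v : E => ∫ y : E, radialWeight r c v * radialWeight s a y ∂μ) =Θ[⊤]
      radialWeight r c := by
  simp only [integral_const_mul, mul_comm _ (∫ y : E, radialWeight s a y ∂μ)]
  exact (isTheta_const_mul_left (radialWeight.integral_pos s ha).ne').2 isTheta_rfl

lemma isTheta_integral_translate_mul_of_lt (hs : 0 ≤ s) (ha : 0 ≤ a) (hab : a < b)
    (hfm : AEStronglyMeasurable f μ) (hgm : AEStronglyMeasurable g μ)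
    (hf0 : ∀ x, 0 ≤ f x) (hg0 : ∀ x, 0 ≤ g x)
    (hf : f =Θ[⊤] radialWeight (-s) (-a)) (hg : g =Θ[⊤] radialWeight (-t) (-b)) :
    (fun v => ∫ y, f (y + v) * g y ∂μ) =Θ[⊤] radialWeight (-s) (-a) := by
  have product : (uncurry fun v y => f (y + v) * g y) =Θ[⊤] uncurry fun v y =>
      radialWeight (-s) (-a) (v + y) * radialWeight (-t) (-b) y := by
    simp only [add_comm]
    exact (isTheta_comp_tendsto hf tendsto_top).mul (isTheta_comp_tendsto hg tendsto_top)
  have upper : (uncurry fun v y => f (y + v) * g y) =O[⊤] uncurry fun v y =>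
      radialWeight (-s) (-a) v * radialWeight (s + -t) (a + -b) y :=
    product.isBigO.trans <| isBigO_top_uncurry_of_le
      (fun v y => mul_nonneg (radialWeight.nonneg _ _ _) (radialWeight.nonneg _ _ _))
      (radialWeight.neg_neg_add_mul_le hs ha _ _)
  have lower : (uncurry fun v y => radialWeight (-s) (-a) v *
      radialWeight (-s + -t) (-a + -b) y) =O[⊤] uncurry fun v y => f (y + v) * g y :=
    (isBigO_top_uncurry_of_le
      (fun v y => mul_nonneg (radialWeight.nonneg _ _ _) (radialWeight.nonneg _ _ _))
      (radialWeight.le_neg_neg_add_mul hs ha _ _)).trans product.isBigO_symm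
  have integrable_upper (v : E) : Integrable (fun y => radialWeight (-s) (-a) v *
      radialWeight (s + -t) (a + -b) y) μ :=
    (radialWeight.integrable _ (by linarith)).const_mul _
  have integrable_product (v : E) : Integrable (fun y => f (y + v) * g y) μ := by
    have hm : AEStronglyMeasurable (fun y => f (y + v) * g y) μ :=
      (hfm.comp_measurePreserving (measurePreserving_add_right μ v)).mul hgm
    exact integrableAtFilter_top.1 <| (upper.comp_tendsto
      (tendsto_top (f := Prod.mk v))).integrableAtFilter hm.stronglyMeasurableAtFilter
      (integrableAtFilter_top.2 (integrable_upper v))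
  constructor
  · exact (isBigO_top_integral upper
      (fun v y => mul_nonneg (radialWeight.nonneg _ _ _) (radialWeight.nonneg _ _ _))
      integrable_upper).trans (isTheta_integral_radialWeight_mul _ _ _ (by linarith)).isBigO
  · exact (isTheta_integral_radialWeight_mul _ _ _ (by linarith)).isBigO_symm.trans <|
      isBigO_top_integral lower (fun v y => mul_nonneg (hf0 _) (hg0 _)) integrable_product

lemma isTheta_integral_mul_translate (hs : 0 ≤ s) (ha : 0 ≤ a) (hb : 0 ≤ b) (hab : a ≠ b)
    (hfm : AEStronglyMeasurable f μ) (hgm : AEStronglyMeasurable g μ)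
    (hf0 : ∀ x, 0 ≤ f x) (hg0 : ∀ x, 0 ≤ g x)
    (hf : f =Θ[⊤] radialWeight (-s) (-a)) (hg : g =Θ[⊤] radialWeight (-s) (-b)) :
    (fun v => ∫ x, f x * g (x - v) ∂μ) =Θ[⊤] radialWeight (-s) (-min a b) := by
  rcases hab.lt_or_gt with hlt | hgt
  · have translate (v : E) : ∫ x, f x * g (x - v) ∂μ = ∫ y, f (y + v) * g y ∂μ := by
      simpa only [add_sub_cancel_right] using
        (integral_add_right_eq_self (μ := μ) (fun x => f x * g (x - v)) v).symm
    simp only [translate, min_eq_left hlt.le]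
    exact isTheta_integral_translate_mul_of_lt hs ha hlt hfm hgm hf0 hg0 hf hg
  · have swap := isTheta_comp_tendsto
      (isTheta_integral_translate_mul_of_lt hs hb hgt hgm hfm hg0 hf0 hg hf)
      (tendsto_top : Tendsto (fun v : E => -v) ⊤ ⊤)
    simpa only [radialWeight.apply_neg, ← sub_eq_add_neg, mul_comm, min_eq_right hgt.le]
      using swap

end Interaction

section HasRadialDecay

variable {N : ℕ} {w : EuclideanSpace ℝ (Fin N) → ℝ} {lam : ℝ}

namespace HasRadialDecay

lemma isTheta_cobounded (hw : HasRadialDecay w lam) :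
    w =Θ[cobounded _] fun x => ‖x‖ ^ (-((N : ℝ) - 1) / 2) * exp (-√lam * ‖x‖) := by
  obtain ⟨hpos, M, c, C, -, hc, -, hbounds⟩ := hw
  have hlarge := eventually_cobounded_le_norm (E := EuclideanSpace ℝ (Fin N)) M
  constructor
  · refine .of_bound C (hlarge.mono fun x hx => ?_)
    rw [Real.norm_of_nonneg (hpos x).le, Real.norm_of_nonneg (by positivity), ← mul_assoc]
    exact (hbounds x hx).2
  · refine .of_bound c⁻¹ (hlarge.mono fun x hx => ?_)
    rw [Real.norm_of_nonneg (hpos x).le, Real.norm_of_nonneg (by positivity),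
      le_inv_mul_iff₀ hc, ← mul_assoc]
    exact (hbounds x hx).1

lemma isTheta_radialWeight (hw : HasRadialDecay w lam) (hwc : Continuous w) :
    w =Θ[⊤] radialWeight (-((N : ℝ) - 1) / 2) (-√lam) := by
  refine isTheta_top_of_isTheta_cocompact hwc (radialWeight.continuous _ _)
    (fun x => (hw.1 x).ne') (fun x => (radialWeight.pos _ _ x).ne') ?_
  rw [← Metric.cobounded_eq_cocompact]
  exact hw.isTheta_cobounded.trans (radialWeight.isTheta_cobounded _ _).symm

lemma sq_isTheta_radialWeight (hw : HasRadialDecay w lam) (hwc : Continuous w) :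
    (fun x => w x ^ 2) =Θ[⊤] radialWeight (-((N : ℝ) - 1)) (-(2 * √lam)) := by
  simpa only [sq, two_mul, neg_add, radialWeight.mul_apply, add_halves] using
    (hw.isTheta_radialWeight hwc).mul (hw.isTheta_radialWeight hwc)

end HasRadialDecay

lemma isTheta_integral_sq_mul_sq_translate (hN : N ≠ 0) {lam₁ lam₂ : ℝ} (hlam₁ : 0 ≤ lam₁)
    (hlam₂ : 0 ≤ lam₂) (hne : lam₁ ≠ lam₂) {w₁ w₂ : EuclideanSpace ℝ (Fin N) → ℝ}
    (hw₁c : Continuous w₁) (hw₂c : Continuous w₂) (hw₁ : HasRadialDecay w₁ lam₁)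
    (hw₂ : HasRadialDecay w₂ lam₂) :
    (fun v => ∫ x, w₁ x ^ 2 * w₂ (x - v) ^ 2) =Θ[⊤]
      radialWeight (1 - (N : ℝ)) (-2 * min √lam₁ √lam₂) := by
  have rates_ne : 2 * √lam₁ ≠ 2 * √lam₂ := by
    simpa only [ne_eq, mul_eq_mul_left_iff, two_ne_zero, or_false, sqrt_inj hlam₁ hlam₂] using hne
  have dim_sub_one_nonneg : 0 ≤ (N : ℝ) - 1 :=
    sub_nonneg.2 (Nat.one_le_cast.2 (Nat.one_le_iff_ne_zero.2 hN))
  have h := isTheta_integral_mul_translate (μ := volume) dim_sub_one_nonneg (by positivity)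
    (by positivity) rates_ne (hw₁c.pow 2).aestronglyMeasurable (hw₂c.pow 2).aestronglyMeasurable
    (fun x => sq_nonneg _) (fun x => sq_nonneg _) (hw₁.sq_isTheta_radialWeight hw₁c)
    (hw₂.sq_isTheta_radialWeight hw₂c)
  rwa [neg_sub, ← mul_min_of_nonneg _ _ zero_le_two, ← neg_mul] at h

end HasRadialDecay

theorem interaction_estimate_distinct_rates_general
    (N : ℕ) (lam₁ lam₂ : ℝ) (hlam₁ : 0 ≤ lam₁) (hlam₂ : 0 ≤ lam₂) (hne : lam₁ ≠ lam₂)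
    (w₁ w₂ : EuclideanSpace ℝ (Fin N) → ℝ)
    (hw₁c : Continuous w₁) (hw₂c : Continuous w₂)
    (hw₁ : HasRadialDecay w₁ lam₁) (hw₂ : HasRadialDecay w₂ lam₂)
    (e₁ : EuclideanSpace ℝ (Fin N)) (he₁ : ‖e₁‖ = 1) :
    ∃ c C R₀ : ℝ, 0 < c ∧ 0 < C ∧ 0 < R₀ ∧
      ∀ R : ℝ, R₀ ≤ R →
        c * R ^ ((1 : ℝ) - (N : ℝ)) *
            exp (-2 * min √lam₁ √lam₂ * R)
            ≤ (∫ x, (w₁ x) ^ 2 * (w₂ (x - R • e₁)) ^ 2) ∧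
        (∫ x, (w₁ x) ^ 2 * (w₂ (x - R • e₁)) ^ 2)
            ≤ C * R ^ ((1 : ℝ) - (N : ℝ)) *
                exp (-2 * min √lam₁ √lam₂ * R) := by
  have hN : N ≠ 0 := by
    rintro rfl
    simp [Subsingleton.elim e₁ 0] at he₁
  have along_ray := (isTheta_comp_tendsto (isTheta_integral_sq_mul_sq_translate hN hlam₁ hlam₂ hne
    hw₁c hw₂c hw₁ hw₂) tendsto_top).trans (radialWeight.isTheta_atTop_smul _ _ he₁)
  simpa only [mul_assoc] using exists_pos_bounds_of_isTheta_atTop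
    (.of_forall fun R => integral_nonneg fun x => by positivity)
    ((eventually_ge_atTop 0).mono fun R (hR : 0 ≤ R) => by positivity) along_ray

end

theorem interaction_estimate_distinct_rates
    (N : ℕ) (hN : N = 1 ∨ N = 2 ∨ N = 3)
    (lam₁ lam₂ : ℝ) (hlam₁ : 0 < lam₁) (hlam₂ : 0 < lam₂) (hne : lam₁ ≠ lam₂)
    (w₁ w₂ : EuclideanSpace ℝ (Fin N) → ℝ)
    (hw₁c : Continuous w₁) (hw₂c : Continuous w₂)
    (hw₁ : HasRadialDecay w₁ lam₁) (hw₂ : HasRadialDecay w₂ lam₂)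
    (e₁ : EuclideanSpace ℝ (Fin N)) (he₁ : ‖e₁‖ = 1) :
    ∃ c C R₀ : ℝ, 0 < c ∧ 0 < C ∧ 0 < R₀ ∧
      ∀ R : ℝ, R₀ ≤ R →
        c * R ^ ((1 : ℝ) - (N : ℝ)) *
            Real.exp (-2 * min (Real.sqrt lam₁) (Real.sqrt lam₂) * R)
            ≤ (∫ x, (w₁ x) ^ 2 * (w₂ (x - R • e₁)) ^ 2) ∧
        (∫ x, (w₁ x) ^ 2 * (w₂ (x - R • e₁)) ^ 2)
            ≤ C * R ^ ((1 : ℝ) - (N : ℝ)) *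
                Real.exp (-2 * min (Real.sqrt lam₁) (Real.sqrt lam₂) * R) := by
  exact interaction_estimate_distinct_rates_general N lam₁ lam₂ hlam₁.le hlam₂.le hne w₁ w₂
    hw₁c hw₂c hw₁ hw₂ e₁ he₁
end

section
/- Let N ∈ {2,3}, let a > 0, and let e₁ ∈ ℝ^N be a unit vector. Then there exist constants C, R₀ > 0 such that for all R ≥ R₀, ∫_{{x : ‖x‖ > R/2 and ‖x − R·e₁‖ > R/2}} (‖x‖·‖x − R·e₁‖)^{1−N}·e^{−a·(‖x‖ + ‖x − R·e₁‖)} dx ≤ C·R^{1−N}·e^{−a·R}. -/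
open MeasureTheory Real

/-!
On the outer region the factor `‖x - R • e₁‖ ^ (1 - N) * exp (-a * ‖x - R • e₁‖)` is at most its
value at distance `R / 2`. What remains is a radial integral, in which the Jacobian `r ^ (N - 1)`
cancels the power weight exactly, so that it equals a constant times `exp (-a * (R / 2))`. The
two factors `exp (-a * (R / 2))` multiply to `exp (-a * R)`.
-/

open Set Metric Module

lemma eqOn_pow_pred_mul_rpow_one_sub_mul {n : ℕ} (hn : 0 < n) (g : ℝ → ℝ) :
    EqOn (fun r ↦ r ^ (n - 1) * (r ^ (1 - n : ℝ) * g r)) g (Ioi 0) := by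
  intro r hr
  dsimp only
  rw [← mul_assoc, ← rpow_natCast, ← rpow_add hr, Nat.cast_pred hn, sub_add_sub_cancel, sub_self,
    rpow_zero, one_mul]

lemma antitoneOn_rpow_mul_exp_neg_mul {s a : ℝ} (hs : s ≤ 0) (ha : 0 ≤ a) :
    AntitoneOn (fun r : ℝ ↦ r ^ s * exp (-a * r)) (Ioi 0) := by
  intro r hr t _ hrt
  have hr0 : 0 < r := hr
  have hpow : t ^ s ≤ r ^ s := rpow_le_rpow_of_nonpos hr0 hrt hs
  have hexp : exp (-a * t) ≤ exp (-a * r) :=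
    exp_le_exp.mpr (mul_le_mul_of_nonpos_left hrt (neg_nonpos.mpr ha))
  exact mul_le_mul hpow hexp (exp_nonneg _) (rpow_nonneg hr0.le s)

lemma setIntegral_fun_norm_mul_fun_norm_sub_le
    {E : Type*} [NormedAddCommGroup E] [MeasurableSpace E] [OpensMeasurableSpace E]
    {μ : Measure E} {φ : ℝ → ℝ} {ρ : ℝ} (hanti : AntitoneOn φ (Ici ρ))
    (hnonneg : ∀ r ∈ Ici ρ, 0 ≤ φ r) (hint : IntegrableOn (fun x ↦ φ ‖x‖) {x | ρ < ‖x‖} μ)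
    (p : E) :
    ∫ x in {x | ρ < ‖x‖ ∧ ρ < ‖x - p‖}, φ ‖x‖ * φ ‖x - p‖ ∂μ ≤
      φ ρ * ∫ x in {x | ρ < ‖x‖}, φ ‖x‖ ∂μ := by
  have hmeas : MeasurableSet {x : E | ρ < ‖x‖} :=
    (isOpen_lt continuous_const continuous_norm).measurableSet
  have hsub : {x | ρ < ‖x‖ ∧ ρ < ‖x - p‖} ⊆ {x | ρ < ‖x‖} := fun _ hx ↦ hx.1
  have hρ : 0 ≤ φ ρ := hnonneg ρ self_mem_Ici
  have hint' : IntegrableOn (fun x ↦ φ ρ * φ ‖x‖) {x | ρ < ‖x‖} μ := hint.const_mul (φ ρ)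
  calc ∫ x in {x | ρ < ‖x‖ ∧ ρ < ‖x - p‖}, φ ‖x‖ * φ ‖x - p‖ ∂μ
    _ ≤ ∫ x in {x | ρ < ‖x‖ ∧ ρ < ‖x - p‖}, φ ρ * φ ‖x‖ ∂μ := by
      refine setIntegral_mono_of_nonneg (fun x hx ↦ ?_) (fun x hx ↦ ?_) (hint'.mono_set hsub)
      · exact mul_nonneg (hnonneg _ hx.1.le) (hnonneg _ hx.2.le)
      · rw [mul_comm]
        exact mul_le_mul_of_nonneg_right (hanti self_mem_Ici hx.2.le hx.2.le)
          (hnonneg _ hx.1.le)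
    _ ≤ ∫ x in {x | ρ < ‖x‖}, φ ρ * φ ‖x‖ ∂μ :=
      setIntegral_mono_set hint'
        ((ae_restrict_mem hmeas).mono fun x (hx : ρ < ‖x‖) ↦ mul_nonneg hρ (hnonneg _ hx.le))
        hsub.eventuallyLE
    _ = φ ρ * ∫ x in {x | ρ < ‖x‖}, φ ‖x‖ ∂μ := integral_const_mul _ _

section Radial

variable {E F : Type*} [NormedAddCommGroup E] [NormedSpace ℝ E] [FiniteDimensional ℝ E]
  [Nontrivial E] [MeasurableSpace E] [BorelSpace E] [NormedAddCommGroup F] [NormedSpace ℝ F]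
  (μ : Measure E) [μ.IsAddHaarMeasure]

lemma integrableOn_fun_norm_preimage_iff {f : ℝ → F} {s : Set ℝ} (hs : MeasurableSet s) :
    IntegrableOn (fun x : E ↦ f ‖x‖) (norm ⁻¹' s) μ ↔
      IntegrableOn (fun r ↦ r ^ (finrank ℝ E - 1) • f r) (s ∩ Ioi 0) := by
  rw [← integrable_indicator_iff (measurable_norm hs), ← integrableOn_indicator_iff hs,
    indicator_smul]
  exact integrable_fun_norm_addHaar μ (f := s.indicator f)

lemma setIntegral_fun_norm_preimage (f : ℝ → F) {s : Set ℝ} (hs : MeasurableSet s) :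
    ∫ x in norm ⁻¹' s, f ‖x‖ ∂μ = finrank ℝ E • μ.real (ball 0 1) •
      ∫ r in Ioi 0 ∩ s, r ^ (finrank ℝ E - 1) • f r := by
  rw [← integral_indicator (measurable_norm hs), ← setIntegral_indicator hs, indicator_smul]
  exact integral_fun_norm_addHaar μ (s.indicator f)

variable {a ρ : ℝ}

lemma integrableOn_norm_rpow_mul_exp_neg_mul (ha : 0 < a) (hρ : 0 ≤ ρ) :
    IntegrableOn (fun x : E ↦ ‖x‖ ^ (1 - finrank ℝ E : ℝ) * exp (-a * ‖x‖)) {x | ρ < ‖x‖} μ := by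
  refine (integrableOn_fun_norm_preimage_iff μ
    (f := fun r ↦ r ^ (1 - finrank ℝ E : ℝ) * exp (-a * r)) measurableSet_Ioi).mpr ?_
  rw [inter_eq_left.mpr (Ioi_subset_Ioi hρ)]
  have hcancel := eqOn_pow_pred_mul_rpow_one_sub_mul (finrank_pos (R := ℝ) (M := E))
    (fun r ↦ exp (-a * r))
  exact (integrableOn_exp_mul_Ioi (neg_neg_of_pos ha) ρ).congr_fun
    (hcancel.mono (Ioi_subset_Ioi hρ)).symm measurableSet_Ioi

lemma setIntegral_norm_rpow_mul_exp_neg_mul (ha : 0 < a) (hρ : 0 ≤ ρ) :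
    ∫ x in {x : E | ρ < ‖x‖}, ‖x‖ ^ (1 - finrank ℝ E : ℝ) * exp (-a * ‖x‖) ∂μ =
      finrank ℝ E * μ.real (ball 0 1) / a * exp (-a * ρ) := by
  refine (setIntegral_fun_norm_preimage μ
    (fun r ↦ r ^ (1 - finrank ℝ E : ℝ) * exp (-a * r)) measurableSet_Ioi).trans ?_
  have hcancel := eqOn_pow_pred_mul_rpow_one_sub_mul (finrank_pos (R := ℝ) (M := E))
    (fun r ↦ exp (-a * r))
  simp only [nsmul_eq_mul, smul_eq_mul]
  rw [inter_eq_right.mpr (Ioi_subset_Ioi hρ),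
    setIntegral_congr_fun measurableSet_Ioi (hcancel.mono (Ioi_subset_Ioi hρ)),
    integral_exp_mul_Ioi (neg_neg_of_pos ha), neg_div_neg_eq]
  ring

lemma setIntegral_norm_mul_norm_sub_rpow_mul_exp_le (ha : 0 < a) (hρ : 0 < ρ) (p : E) :
    ∫ x in {x | ρ < ‖x‖ ∧ ρ < ‖x - p‖},
        (‖x‖ * ‖x - p‖) ^ (1 - finrank ℝ E : ℝ) * exp (-a * (‖x‖ + ‖x - p‖)) ∂μ ≤
      finrank ℝ E * μ.real (ball 0 1) / a * ρ ^ (1 - finrank ℝ E : ℝ) * exp (-a * (2 * ρ)) := by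
  set φ : ℝ → ℝ := fun r ↦ r ^ (1 - finrank ℝ E : ℝ) * exp (-a * r)
  have hexponent : (1 - finrank ℝ E : ℝ) ≤ 0 :=
    sub_nonpos.mpr (Nat.one_le_cast.mpr finrank_pos)
  have hanti : AntitoneOn φ (Ici ρ) :=
    (antitoneOn_rpow_mul_exp_neg_mul hexponent ha.le).mono (Ici_subset_Ioi.mpr hρ)
  have hnonneg : ∀ r ∈ Ici ρ, 0 ≤ φ r := fun r hr ↦
    mul_nonneg (rpow_nonneg (hρ.le.trans hr) _) (exp_nonneg _)
  have hfactor (x : E) :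
      (‖x‖ * ‖x - p‖) ^ (1 - finrank ℝ E : ℝ) * exp (-a * (‖x‖ + ‖x - p‖)) =
        φ ‖x‖ * φ ‖x - p‖ := by
    rw [mul_rpow (norm_nonneg _) (norm_nonneg _), mul_add, exp_add, mul_mul_mul_comm]
  simp only [hfactor]
  calc ∫ x in {x | ρ < ‖x‖ ∧ ρ < ‖x - p‖}, φ ‖x‖ * φ ‖x - p‖ ∂μ
    _ ≤ φ ρ * ∫ x in {x | ρ < ‖x‖}, φ ‖x‖ ∂μ :=
      setIntegral_fun_norm_mul_fun_norm_sub_le hanti hnonneg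
        (integrableOn_norm_rpow_mul_exp_neg_mul μ ha hρ.le) p
    _ = φ ρ * (finrank ℝ E * μ.real (ball 0 1) / a * exp (-a * ρ)) := by
      rw [setIntegral_norm_rpow_mul_exp_neg_mul μ ha hρ.le]
    _ = _ := by
      rw [two_mul, mul_add, exp_add]
      ring

theorem outer_region_estimate_general (ha : 0 < a) :
    ∃ C : ℝ, 0 < C ∧ ∀ (p : E) (R : ℝ), 0 < R →
      ∫ x in {x | R / 2 < ‖x‖ ∧ R / 2 < ‖x - p‖},
          (‖x‖ * ‖x - p‖) ^ (1 - finrank ℝ E : ℝ) * exp (-a * (‖x‖ + ‖x - p‖)) ∂μ ≤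
        C * R ^ (1 - finrank ℝ E : ℝ) * exp (-a * R) := by
  have hdim : (0 : ℝ) < finrank ℝ E := Nat.cast_pos.mpr finrank_pos
  have hball : 0 < μ.real (ball (0 : E) 1) :=
    ENNReal.toReal_pos (measure_ball_pos μ 0 one_pos).ne' measure_ball_lt_top.ne
  refine ⟨finrank ℝ E * μ.real (ball 0 1) / a / 2 ^ (1 - finrank ℝ E : ℝ), by positivity,
    fun p R hR ↦ (setIntegral_norm_mul_norm_sub_rpow_mul_exp_le μ ha (half_pos hR) p).trans_eq ?_⟩
  rw [div_rpow hR.le zero_le_two, mul_div_cancel₀ R two_ne_zero]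
  ring

end Radial

theorem outer_region_estimate
    (N : ℕ) (hN : N = 2 ∨ N = 3) (a : ℝ) (ha : 0 < a)
    (e₁ : EuclideanSpace ℝ (Fin N)) (he₁ : ‖e₁‖ = 1) :
    ∃ C R₀ : ℝ, 0 < C ∧ 0 < R₀ ∧
      ∀ R : ℝ, R₀ ≤ R →
        (∫ x in {x : EuclideanSpace ℝ (Fin N) | R / 2 < ‖x‖ ∧ R / 2 < ‖x - R • e₁‖},
            (‖x‖ * ‖x - R • e₁‖) ^ ((1 : ℝ) - (N : ℝ)) *
              Real.exp (-a * (‖x‖ + ‖x - R • e₁‖)))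
          ≤ C * R ^ ((1 : ℝ) - (N : ℝ)) * Real.exp (-a * R) := by
  have : Nontrivial (EuclideanSpace ℝ (Fin N)) :=
    nontrivial_of_ne e₁ 0 (norm_ne_zero_iff.mp (he₁ ▸ one_ne_zero))
  obtain ⟨C, hC, hbound⟩ :=
    outer_region_estimate_general (volume : Measure (EuclideanSpace ℝ (Fin N))) ha
  simp only [finrank_euclideanSpace_fin] at hbound
  exact ⟨C, 1, hC, one_pos, fun R hR ↦ hbound (R • e₁) R (one_pos.trans_le hR)⟩
end

section
/- Let N ≥ 1 and let g, h : [0,∞) → (0,∞) be continuous, strictly decreasing functions for which there exist C, δ > 0 with g(r) ≤ C·e^{−δ·r} and h(r) ≤ C·e^{−δ·r} for all r ≥ 0. Define u(x) = g(‖x‖), v(x) = h(‖x‖), and F(z) = ∫_{ℝ^N} u(x)·v(x + z) dx. Then F(z) < F(0) for every z ∈ ℝ^N with z ≠ 0; in particular F attains its maximum over ℝ^N exactly at z = 0. -/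
open MeasureTheory Real

/-!
Write `u x = g ‖x‖`, `v x = h ‖x‖` and `F z = ∫ u x * v (x + z)`. For `z ≠ 0` the integral of
`(u x - u (x + z)) * (v x - v (x + z))` is positive: the factors never have opposite signs, as both
`u` and `v` decrease with the norm, and neither vanishes on the ball of radius `‖z‖ / 2`, where
`‖x‖ < ‖x + z‖`. Expanding the product and using invariance of the measure under `x ↦ x + z` and
`x ↦ -z - x`, this integral equals `2 * (F 0 - F z)`.
-/

section MeasurePreserving

variable {α : Type*} [MeasurableSpace α] {μ : Measure α} {u v : α → ℝ} {τ : α → α}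

theorem integrable_mul_comp_of_monovary (huv : Monovary u v) (hu : 0 ≤ u) (hv : 0 ≤ v)
    (hum : AEStronglyMeasurable u μ) (hvm : AEStronglyMeasurable v μ)
    (hτ : MeasurePreserving τ μ μ) (hprod : Integrable (fun x ↦ u x * v x) μ) :
    Integrable (fun x ↦ u x * v (τ x)) μ := by
  have hprod_comp : Integrable (fun x ↦ u (τ x) * v (τ x)) μ :=
    hτ.integrable_comp_of_integrable hprod
  refine (hprod.add hprod_comp).mono' (hum.mul (hvm.comp_measurePreserving hτ))
    (.of_forall fun x ↦ ?_)
  rw [norm_of_nonneg (mul_nonneg (hu x) (hv (τ x)))]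
  calc u x * v (τ x)
      ≤ u x * v (τ x) + u (τ x) * v x := le_add_of_nonneg_right (mul_nonneg (hu _) (hv _))
    _ ≤ u x * v x + u (τ x) * v (τ x) := by linarith [huv.sub_mul_sub_nonneg x (τ x)]

theorem integral_sub_comp_mul_sub_comp (hτ : MeasurePreserving τ μ μ)
    (hprod : Integrable (fun x ↦ u x * v x) μ)
    (hcross : Integrable (fun x ↦ u x * v (τ x)) μ)
    (hcross_symm : Integrable (fun x ↦ u (τ x) * v x) μ) :
    ∫ x, (u x - u (τ x)) * (v x - v (τ x)) ∂μ =
      2 * ∫ x, u x * v x ∂μ - (∫ x, u x * v (τ x) ∂μ + ∫ x, u (τ x) * v x ∂μ) := by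
  have hprod_comp : Integrable (fun x ↦ u (τ x) * v (τ x)) μ :=
    hτ.integrable_comp_of_integrable hprod
  have integral_τ : ∫ x, u (τ x) * v (τ x) ∂μ = ∫ x, u x * v x ∂μ := by
    have hm : AEStronglyMeasurable (fun x ↦ u x * v x) (μ.map τ) :=
      hτ.map_eq.symm ▸ hprod.aestronglyMeasurable
    rw [← integral_map hτ.aemeasurable hm, hτ.map_eq]
  calc ∫ x, (u x - u (τ x)) * (v x - v (τ x)) ∂μ
      = ∫ x, (u x * v x + u (τ x) * v (τ x)) - (u x * v (τ x) + u (τ x) * v x) ∂μ := by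
        congr with x; ring
    _ = (∫ x, u x * v x ∂μ + ∫ x, u (τ x) * v (τ x) ∂μ) -
          (∫ x, u x * v (τ x) ∂μ + ∫ x, u (τ x) * v x ∂μ) := by
        rw [integral_sub (hprod.fun_add hprod_comp) (hcross.fun_add hcross_symm),
          integral_add hprod hprod_comp, integral_add hcross hcross_symm]
    _ = _ := by rw [integral_τ, two_mul]

theorem integral_mul_comp_add_integral_comp_mul_lt_of_monovary (huv : Monovary u v)
    (hu : 0 ≤ u) (hv : 0 ≤ v)
    (hum : AEStronglyMeasurable u μ) (hvm : AEStronglyMeasurable v μ)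
    (hτ : MeasurePreserving τ μ μ) (hprod : Integrable (fun x ↦ u x * v x) μ)
    (hne : 0 < μ {x | u x ≠ u (τ x) ∧ v x ≠ v (τ x)}) :
    ∫ x, u x * v (τ x) ∂μ + ∫ x, u (τ x) * v x ∂μ < 2 * ∫ x, u x * v x ∂μ := by
  have hcross : Integrable (fun x ↦ u x * v (τ x)) μ :=
    integrable_mul_comp_of_monovary huv hu hv hum hvm hτ hprod
  have hcross_symm : Integrable (fun x ↦ u (τ x) * v x) μ := by
    simpa only [mul_comm] using integrable_mul_comp_of_monovary huv.symm hv hu hvm hum hτ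
      (by simpa only [mul_comm] using hprod)
  have hprod_comp : Integrable (fun x ↦ u (τ x) * v (τ x)) μ :=
    hτ.integrable_comp_of_integrable hprod
  have hsub : Integrable (fun x ↦ (u x - u (τ x)) * (v x - v (τ x))) μ :=
    ((hprod.add hprod_comp).sub (hcross.add hcross_symm)).congr
      (.of_forall fun x ↦ by simp only [Pi.add_apply, Pi.sub_apply]; ring)
  have integral_sub_pos : 0 < ∫ x, (u x - u (τ x)) * (v x - v (τ x)) ∂μ := by
    refine (integral_pos_iff_support_of_nonneg
      (fun x ↦ huv.sub_mul_sub_nonneg (τ x) x) hsub).2 (hne.trans_le (measure_mono ?_))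
    exact fun x hx ↦ mul_ne_zero (sub_ne_zero.2 hx.1) (sub_ne_zero.2 hx.2)
  rw [integral_sub_comp_mul_sub_comp hτ hprod hcross hcross_symm] at integral_sub_pos
  exact sub_pos.1 integral_sub_pos

end MeasurePreserving

section AddCommGroup

variable {G : Type*} [AddCommGroup G] [MeasurableSpace G] [MeasurableAdd G] [MeasurableNeg G]
  {μ : Measure G} [μ.IsAddLeftInvariant] [μ.IsNegInvariant] {u v : G → ℝ}

theorem integral_comp_add_right_mul_of_even (hu : u.Even) (hv : v.Even) (z : G) :
    ∫ x, u (x + z) * v x ∂μ = ∫ x, u x * v (x + z) ∂μ := by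
  rw [← integral_sub_left_eq_self (fun x ↦ u x * v (x + z)) μ (-z)]
  congr with x
  rw [← hu (x + z), ← hv x]
  congr 2 <;> abel

theorem integral_mul_comp_add_right_lt_of_monovary (hu_even : u.Even) (hv_even : v.Even)
    (huv : Monovary u v) (hu : 0 ≤ u) (hv : 0 ≤ v)
    (hum : AEStronglyMeasurable u μ) (hvm : AEStronglyMeasurable v μ)
    (hprod : Integrable (fun x ↦ u x * v x) μ) {z : G}
    (hne : 0 < μ {x | u x ≠ u (x + z) ∧ v x ≠ v (x + z)}) :
    ∫ x, u x * v (x + z) ∂μ < ∫ x, u x * v x ∂μ := by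
  have h := integral_mul_comp_add_integral_comp_mul_lt_of_monovary huv hu hv hum hvm
    (measurePreserving_add_right μ z) hprod hne
  rw [integral_comp_add_right_mul_of_even hu_even hv_even] at h
  linarith

end AddCommGroup

section Radial

variable {E : Type*} [NormedAddCommGroup E] [MeasurableSpace E] {μ : Measure E} {g h : ℝ → ℝ}

theorem measurable_comp_norm_of_antitoneOn [OpensMeasurableSpace E]
    (hg : AntitoneOn g (Set.Ici 0)) :
    Measurable fun x : E ↦ g ‖x‖ :=
  (Set.antitoneOn_iff_antitone.1 hg).measurable.comp
    (measurable_norm.subtype_mk (h := fun x : E ↦ norm_nonneg x))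

theorem integrable_mul_comp_norm_of_antitoneOn [OpensMeasurableSpace E] {f : E → ℝ}
    (hf : Integrable f μ) (hh : AntitoneOn h (Set.Ici 0)) (hh_nonneg : ∀ r, 0 ≤ r → 0 ≤ h r) :
    Integrable (fun x ↦ f x * h ‖x‖) μ := by
  refine hf.mul_bdd (c := h 0) (measurable_comp_norm_of_antitoneOn hh).aestronglyMeasurable
    (.of_forall fun x ↦ ?_)
  rw [norm_of_nonneg (hh_nonneg _ (norm_nonneg x))]
  exact hh Set.self_mem_Ici (norm_nonneg x) (norm_nonneg x)

section Decay

variable [BorelSpace E] [NormedSpace ℝ E] [FiniteDimensional ℝ E] [μ.IsAddHaarMeasure]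

theorem integrable_exp_neg_mul_norm {δ : ℝ} (hδ : 0 < δ) :
    Integrable (fun x : E ↦ exp (-δ * ‖x‖)) μ := by
  rcases subsingleton_or_nontrivial E with _ | _
  · exact .of_finite
  · have hrpow := integrableOn_rpow_mul_exp_neg_mul_rpow
      (s := ((Module.finrank ℝ E - 1 : ℕ) : ℝ)) (neg_one_lt_zero.trans_le (Nat.cast_nonneg _))
      one_pos hδ
    rw [integrable_fun_norm_addHaar μ (f := fun r ↦ exp (-δ * r))]
    simpa only [rpow_natCast, rpow_one, smul_eq_mul] using hrpow

theorem integrable_comp_norm_of_le_exp {C δ : ℝ} (hδ : 0 < δ) (hg : AntitoneOn g (Set.Ici 0))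
    (hg_nonneg : ∀ r, 0 ≤ r → 0 ≤ g r) (hg_le : ∀ r, 0 ≤ r → g r ≤ C * exp (-δ * r)) :
    Integrable (fun x : E ↦ g ‖x‖) μ := by
  refine ((integrable_exp_neg_mul_norm hδ).const_mul C).mono'
    (measurable_comp_norm_of_antitoneOn hg).aestronglyMeasurable (.of_forall fun x ↦ ?_)
  rw [norm_of_nonneg (hg_nonneg _ (norm_nonneg x))]
  exact hg_le _ (norm_nonneg x)

end Decay

theorem correlation_strict_max_at_zero_general [BorelSpace E] [μ.IsAddLeftInvariant]
    [μ.IsNegInvariant] [μ.IsOpenPosMeasure]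
    (hg : StrictAntiOn g (Set.Ici 0)) (hh : StrictAntiOn h (Set.Ici 0))
    (hg_pos : ∀ r, 0 ≤ r → 0 < g r) (hh_pos : ∀ r, 0 ≤ r → 0 < h r)
    (hprod : Integrable (fun x : E ↦ g ‖x‖ * h ‖x‖) μ) {z : E} (hz : z ≠ 0) :
    ∫ x, g ‖x‖ * h ‖x + z‖ ∂μ < ∫ x, g ‖x‖ * h ‖x‖ ∂μ := by
  have monovary : Monovary (fun x : E ↦ g ‖x‖) fun x ↦ h ‖x‖ := fun x y hxy ↦
    hg.antitoneOn.monovaryOn hh.antitoneOn (norm_nonneg x) (norm_nonneg y) hxy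
  have ball_pos : 0 < μ (Metric.ball (0 : E) (‖z‖ / 2)) :=
    Metric.measure_ball_pos μ 0 (half_pos (norm_pos_iff.2 hz))
  refine integral_mul_comp_add_right_lt_of_monovary (fun x ↦ by simp only [norm_neg])
    (fun x ↦ by simp only [norm_neg]) monovary
    (fun x ↦ (hg_pos _ (norm_nonneg x)).le) (fun x ↦ (hh_pos _ (norm_nonneg x)).le)
    (measurable_comp_norm_of_antitoneOn hg.antitoneOn).aestronglyMeasurable
    (measurable_comp_norm_of_antitoneOn hh.antitoneOn).aestronglyMeasurable
    hprod (ball_pos.trans_le (measure_mono fun x hx ↦ ?_))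
  have hlt : ‖x‖ < ‖x + z‖ := by linarith [mem_ball_zero_iff.1 hx, norm_le_add_norm_add' x z]
  exact ⟨(hg (norm_nonneg x) (norm_nonneg _) hlt).ne', (hh (norm_nonneg x) (norm_nonneg _) hlt).ne'⟩

end Radial

theorem correlation_strict_max_at_zero
    (N : ℕ) (hN : 1 ≤ N) (g h : ℝ → ℝ)
    (hgc : ContinuousOn g (Set.Ici 0)) (hhc : ContinuousOn h (Set.Ici 0))
    (hgpos : ∀ r : ℝ, 0 ≤ r → 0 < g r) (hhpos : ∀ r : ℝ, 0 ≤ r → 0 < h r)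
    (hganti : StrictAntiOn g (Set.Ici 0)) (hhanti : StrictAntiOn h (Set.Ici 0))
    (hdecay : ∃ C δ : ℝ, 0 < C ∧ 0 < δ ∧ ∀ r : ℝ, 0 ≤ r →
      g r ≤ C * Real.exp (-δ * r) ∧ h r ≤ C * Real.exp (-δ * r)) :
    ∀ z : EuclideanSpace ℝ (Fin N), z ≠ 0 →
      (∫ x : EuclideanSpace ℝ (Fin N), g ‖x‖ * h ‖x + z‖)
        < ∫ x : EuclideanSpace ℝ (Fin N), g ‖x‖ * h ‖x‖ := by
  obtain ⟨C, δ, -, hδ, hle⟩ := hdecay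
  have hg_int : Integrable fun x : EuclideanSpace ℝ (Fin N) ↦ g ‖x‖ :=
    integrable_comp_norm_of_le_exp hδ hganti.antitoneOn (fun r hr ↦ (hgpos r hr).le)
      fun r hr ↦ (hle r hr).1
  exact fun _ ↦ correlation_strict_max_at_zero_general hganti hhanti hgpos hhpos
    (integrable_mul_comp_norm_of_antitoneOn hg_int hhanti.antitoneOn fun r hr ↦ (hhpos r hr).le)
end

section
/- Let N ∈ {1,2,3} and λ, μ > 0. Let w : ℝ^N → ℝ be a positive, twice continuously differentiable function satisfying −Δw(x) + λ·w(x) = μ·w(x)³ for all x ∈ ℝ^N, where Δw denotes the Laplacian (the sum of the second partial derivatives), and suppose there exist C, δ > 0 such that w(x) + ‖fderiv ℝ w x‖ + ‖iteratedFDeriv ℝ 2 w x‖ ≤ C·e^{−δ·‖x‖} for all x. Then the Pohozaev identity λ·∫_{ℝ^N} w(x)² dx = ((4 − N)/4)·μ·∫_{ℝ^N} w(x)⁴ dx holds. -/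
open MeasureTheory Real

/-- The Laplacian of `w : ℝ^N → ℝ`: the sum of the second partial derivatives
with respect to the standard orthonormal basis. -/
noncomputable def lap {N : ℕ} (w : EuclideanSpace ℝ (Fin N) → ℝ)
    (x : EuclideanSpace ℝ (Fin N)) : ℝ :=
  ∑ i : Fin N,
    iteratedFDeriv ℝ 2 w x ![EuclideanSpace.single i (1 : ℝ), EuclideanSpace.single i (1 : ℝ)]

/-!
Testing `-Δu = G'(u)` against `u` gives `∫ G'(u) u = ∫ ‖∇u‖²`. Testing it against the generator of
dilations `x ↦ Du(x) x` gives the virial identity `n ∫ G(u) = (n / 2 - 1) ∫ ‖∇u‖²`: on the nonlinear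
side `Du(x) x * G'(u)` is the derivative of `G ∘ u` along `x`, on the other side the symmetry of the
second derivative turns `D²u(∇u, x)` into half the derivative of `‖∇u‖²` along `x`, and in both
cases `∫ Df(x) x = -n ∫ f`. Eliminating `∫ ‖∇u‖²` gives the identity, here with
`G(t) = μ t⁴ / 4 - λ t² / 2`.
-/

section

open Filter Asymptotics Module Topology InnerProductSpace
open scoped Gradient Laplacian

/-- A function with values in a normed group is rapidly decaying if it tends to zero at infinity
faster than every power of `‖x‖`. No continuity is included. -/
def RapidlyDecaying {E F : Type*} [NormedAddCommGroup E] [NormedAddCommGroup F] (f : E → F) :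
    Prop :=
  SuperpolynomialDecay (cocompact E) norm fun x => ‖f x‖

lemma hasFDerivAt_apply_self {E F : Type*} [NormedAddCommGroup E] [NormedSpace ℝ E]
    [NormedAddCommGroup F] [NormedSpace ℝ F] {L : E → E →L[ℝ] F} {x : E}
    (hL : DifferentiableAt ℝ L x) :
    HasFDerivAt (fun y => L y y) (L x + (fderiv ℝ L x).flip x) x := by
  simpa using! hL.hasFDerivAt.clm_apply (hasFDerivAt_id x)

namespace RapidlyDecaying

variable {E F G : Type*} [NormedAddCommGroup E] [NormedAddCommGroup F] [NormedAddCommGroup G]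
  {f : E → F} {g : E → G}

lemma of_isBigO (hf : RapidlyDecaying f) (hgf : g =O[cocompact E] f) : RapidlyDecaying g := by
  obtain ⟨c, hc⟩ := hgf.bound
  refine SuperpolynomialDecay.trans_eventually_abs_le (hf.const_mul c) ?_
  filter_upwards [hc] with x hx
  simpa using hx.trans (le_abs_self _)

lemma of_norm_le {f : E → ℝ} (hf : RapidlyDecaying f) (hgf : ∀ x, ‖g x‖ ≤ f x) :
    RapidlyDecaying g :=
  hf.of_isBigO (.of_norm_le hgf)

lemma tendsto_zero (hf : RapidlyDecaying f) : Tendsto f (cocompact E) (𝓝 0) :=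
  tendsto_zero_iff_norm_tendsto_zero.2 (by simpa using hf 0)

lemma norm_add_norm (hf : RapidlyDecaying f) (hg : RapidlyDecaying g) :
    RapidlyDecaying fun x => ‖f x‖ + ‖g x‖ :=
  (SuperpolynomialDecay.add hf hg).congr fun x =>
    (Real.norm_of_nonneg (add_nonneg (norm_nonneg (f x)) (norm_nonneg (g x)))).symm

lemma norm_mul_norm (hf : RapidlyDecaying f) (hg : RapidlyDecaying g) :
    RapidlyDecaying fun x => ‖f x‖ * ‖g x‖ :=
  (SuperpolynomialDecay.mul hf hg).congr fun x => by simp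

lemma mul {f g : E → ℝ} (hf : RapidlyDecaying f) (hg : RapidlyDecaying g) :
    RapidlyDecaying fun x => f x * g x :=
  (hf.norm_mul_norm hg).of_norm_le fun _ => norm_mul_le _ _

lemma norm_id_mul_norm (hf : RapidlyDecaying f) : RapidlyDecaying fun x => ‖x‖ * ‖f x‖ :=
  (SuperpolynomialDecay.param_mul hf).congr fun x => by simp

lemma comp_left [NormedSpace ℝ F] [NormedSpace ℝ G] (hf : RapidlyDecaying f) {φ : F → G}
    (hφ : DifferentiableAt ℝ φ 0) (hφ0 : φ 0 = 0) : RapidlyDecaying fun x => φ (f x) := by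
  have hφ' : φ =O[𝓝 0] fun y => y := by simpa [hφ0] using hφ.isBigO_sub
  exact hf.of_isBigO (hφ'.comp_tendsto hf.tendsto_zero)

lemma fderiv_comp_left [NormedSpace ℝ E] [NormedSpace ℝ F] [NormedSpace ℝ G]
    (hf : RapidlyDecaying f) (hf' : RapidlyDecaying (fderiv ℝ f)) {φ : F → G}
    (hφ : ContDiff ℝ 1 φ) (hf_diff : Differentiable ℝ f) :
    RapidlyDecaying (fderiv ℝ (φ ∘ f)) := by
  have h_bdd : (fun x => fderiv ℝ φ (f x)) =O[cocompact E] (1 : E → ℝ) :=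
    (((hφ.continuous_fderiv one_ne_zero).tendsto 0).comp hf.tendsto_zero).isBigO_one ℝ
  have h_chain x : ‖fderiv ℝ (φ ∘ f) x‖ ≤ ‖fderiv ℝ φ (f x)‖ * ‖fderiv ℝ f x‖ := by
    rw [fderiv_comp x (hφ.differentiable one_ne_zero _) (hf_diff x)]
    exact ContinuousLinearMap.opNorm_comp_le _ _
  have h_mul := (IsBigO.of_norm_le h_chain).trans
    (h_bdd.norm_left.mul (isBigO_refl (fun x => ‖fderiv ℝ f x‖) _))
  exact hf'.of_isBigO (by simpa using! h_mul)

lemma apply [NormedSpace ℝ F] [NormedSpace ℝ G] {L : E → F →L[ℝ] G} (hL : RapidlyDecaying L)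
    (v : F) : RapidlyDecaying fun x => L x v :=
  hL.comp_left (φ := fun A : F →L[ℝ] G => A v) (by fun_prop) rfl

lemma apply_self [NormedSpace ℝ E] [NormedSpace ℝ F] {L : E → E →L[ℝ] F}
    (hL : RapidlyDecaying L) : RapidlyDecaying fun x => L x x :=
  hL.norm_id_mul_norm.of_norm_le fun x => by simpa [mul_comm] using (L x).le_opNorm x

lemma fderiv_apply_self [NormedSpace ℝ E] [NormedSpace ℝ F] {L : E → E →L[ℝ] F}
    (hL : RapidlyDecaying L) (hL' : RapidlyDecaying (fderiv ℝ L)) (hL_diff : Differentiable ℝ L) :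
    RapidlyDecaying (fderiv ℝ fun x => L x x) := by
  refine (hL.norm_add_norm hL'.norm_id_mul_norm).of_norm_le fun x => ?_
  rw [(hasFDerivAt_apply_self (hL_diff x)).fderiv]
  refine norm_add_le_of_le le_rfl ?_
  simpa [mul_comm] using (fderiv ℝ L x).flip.le_opNorm x

lemma integrable [NormedSpace ℝ E] [FiniteDimensional ℝ E] [MeasurableSpace E] [BorelSpace E]
    {ν : Measure E} [ν.IsAddHaarMeasure] (hf : RapidlyDecaying f)
    (hf_loc : LocallyIntegrable f ν) : Integrable f ν := by
  set n := finrank ℝ E + 1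
  have h_weight : Integrable (fun x : E => (1 + ‖x‖) ^ (-(n : ℝ))) ν :=
    integrable_one_add_norm (by simp [n])
  have h_weighted (m : ℕ) : SuperpolynomialDecay (cocompact E) norm
      fun x => (1 + ‖x‖) ^ m * ‖f x‖ := by
    induction m with
    | zero => simpa only [pow_zero, one_mul] using! hf
    | succ m ih =>
      refine (ih.add ih.param_mul).congr fun x => ?_
      simp only [Pi.add_apply, Pi.mul_apply]
      ring
  refine hf_loc.integrable_of_isBigO_cocompact (.of_norm_eventuallyLE ?_)
    (h_weight.integrableAtFilter _)
  filter_upwards [(h_weighted n 0).eventually_le_const one_pos] with x hx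
  rw [pow_zero, one_mul] at hx
  rw [Real.rpow_neg (by positivity), Real.rpow_natCast]
  exact (le_inv_mul_iff₀ (by positivity)).2 hx |>.trans_eq (mul_one _)

lemma integrable_of_continuous [NormedSpace ℝ E] [FiniteDimensional ℝ E] [MeasurableSpace E]
    [BorelSpace E] {ν : Measure E} [ν.IsAddHaarMeasure] (hf : RapidlyDecaying f)
    (hf_cont : Continuous f) : Integrable f ν :=
  hf.integrable hf_cont.locallyIntegrable

lemma of_norm_le_exp [ProperSpace E] {C δ : ℝ} (hδ : 0 < δ)
    (hf : ∀ x, ‖f x‖ ≤ C * Real.exp (-δ * ‖x‖)) : RapidlyDecaying f := by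
  have h_exp : RapidlyDecaying fun x : E => Real.exp (-δ * ‖x‖) := fun n => by
    simpa using! (tendsto_rpow_mul_exp_neg_mul_atTop_nhds_zero n δ hδ).comp
      (tendsto_norm_cocompact_atTop (E := E))
  exact h_exp.of_isBigO (.of_bound C (.of_forall fun x => by simpa using hf x))

lemma of_derivatives_le_exp [NormedSpace ℝ E] [ProperSpace E] [NormedSpace ℝ F] {C δ : ℝ}
    (hδ : 0 < δ)
    (hf : ∀ x, ‖f x‖ + ‖fderiv ℝ f x‖ + ‖iteratedFDeriv ℝ 2 f x‖ ≤ C * Real.exp (-δ * ‖x‖)) :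
    RapidlyDecaying f ∧ RapidlyDecaying (fderiv ℝ f) ∧ RapidlyDecaying (fderiv ℝ (fderiv ℝ f)) := by
  have h_norm x : ‖iteratedFDeriv ℝ 2 f x‖ = ‖fderiv ℝ (fderiv ℝ f) x‖ := by
    rw [← norm_iteratedFDeriv_one, norm_iteratedFDeriv_fderiv]
  simp_rw [h_norm] at hf
  refine ⟨.of_norm_le_exp (C := C) hδ fun x => ?_, .of_norm_le_exp (C := C) hδ fun x => ?_,
    .of_norm_le_exp (C := C) hδ fun x => ?_⟩
  all_goals linarith [hf x, norm_nonneg (f x), norm_nonneg (fderiv ℝ f x),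
    norm_nonneg (fderiv ℝ (fderiv ℝ f) x)]

end RapidlyDecaying

section IntegrationByParts

lemma laplacian_eq_sum_fderiv_fderiv {E F ι : Type*} [NormedAddCommGroup E]
    [InnerProductSpace ℝ E] [FiniteDimensional ℝ E] [NormedAddCommGroup F] [NormedSpace ℝ F]
    [Fintype ι] (b : OrthonormalBasis ι ℝ E) (u : E → F) (x : E) :
    Δ u x = ∑ i, fderiv ℝ (fderiv ℝ u) x (b i) (b i) := by
  simp [laplacian_eq_iteratedFDeriv_orthonormalBasis u b, iteratedFDeriv_two_apply]

variable {E : Type*} [NormedAddCommGroup E] [MeasurableSpace E] [BorelSpace E] {ν : Measure E}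

lemma integral_fderiv_apply_self [NormedSpace ℝ E] [FiniteDimensional ℝ E] [ν.IsAddHaarMeasure]
    {F : Type*} [NormedAddCommGroup F] [NormedSpace ℝ F]
    {f : E → F} (hf : ContDiff ℝ 1 f) (hf_int : Integrable f ν)
    (hxf : Integrable (fun x => ‖x‖ * ‖f x‖) ν)
    (hxf' : Integrable (fun x => ‖x‖ * ‖fderiv ℝ f x‖) ν) :
    ∫ x, fderiv ℝ f x x ∂ν = -(finrank ℝ E : ℝ) • ∫ x, f x ∂ν := by
  have hf' : Continuous (fderiv ℝ f) := hf.continuous_fderiv one_ne_zero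
  let b := finBasis ℝ E
  let coord i : E →L[ℝ] ℝ := (b.coord i).toContinuousLinearMap
  have h_expand x : fderiv ℝ f x x = ∑ i, coord i x • fderiv ℝ f x (b i) := by
    conv_lhs => enter [2]; rw [← b.sum_repr x]
    simp only [map_sum, map_smul, coord, LinearMap.coe_toContinuousLinearMap', Basis.coord_apply]
  have h_int i : Integrable (fun x => coord i x • fderiv ℝ f x (b i)) ν := by
    refine (hxf'.const_mul (‖coord i‖ * ‖b i‖)).mono' ?_ (.of_forall fun x => ?_)
    · exact ((coord i).continuous.smul (hf'.clm_apply continuous_const)).aestronglyMeasurable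
    · calc ‖coord i x • fderiv ℝ f x (b i)‖
          ≤ (‖coord i‖ * ‖x‖) * (‖fderiv ℝ f x‖ * ‖b i‖) := by
            rw [norm_smul]; gcongr <;> exact ContinuousLinearMap.le_opNorm _ _
        _ = ‖coord i‖ * ‖b i‖ * (‖x‖ * ‖fderiv ℝ f x‖) := by ring
  have h_coord_int i : Integrable (fun x => coord i x • f x) ν := by
    refine (hxf.const_mul ‖coord i‖).mono' ?_ (.of_forall fun x => ?_)
    · exact ((coord i).continuous.smul hf.continuous).aestronglyMeasurable
    · rw [norm_smul, ← mul_assoc]; gcongr; exact (coord i).le_opNorm x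
  have h_fderiv_coord i x : fderiv ℝ (coord i) x (b i) = 1 := by
    rw [(coord i).fderiv]; simp [coord]
  have h_parts i : ∫ x, coord i x • fderiv ℝ f x (b i) ∂ν = -∫ x, f x ∂ν := by
    rw [integral_smul_fderiv_eq_neg_fderiv_smul_of_integrable
      (by simpa only [h_fderiv_coord, one_smul] using hf_int) (h_int i) (h_coord_int i)
      (fun x _ => (coord i).differentiableAt) (fun x _ => hf.differentiable one_ne_zero x)]
    simp only [h_fderiv_coord, one_smul]
  simp_rw [h_expand]
  rw [integral_finsetSum _ fun i _ => h_int i]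
  simp [h_parts, ← Nat.cast_smul_eq_nsmul ℝ]

variable [InnerProductSpace ℝ E] [FiniteDimensional ℝ E] [ν.IsAddHaarMeasure]

lemma integral_mul_laplacian {f u : E → ℝ} (hf : Differentiable ℝ f) (hu : ContDiff ℝ 2 u)
    (hfu' : ∀ v, Integrable (fun x => f x * fderiv ℝ u x v) ν)
    (hf'u' : ∀ v, Integrable (fun x => fderiv ℝ f x v * fderiv ℝ u x v) ν)
    (hfu'' : ∀ v, Integrable (fun x => f x * fderiv ℝ (fderiv ℝ u) x v v) ν) :
    ∫ x, f x * Δ u x ∂ν = -∫ x, fderiv ℝ f x (∇ u x) ∂ν := by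
  let b := stdOrthonormalBasis ℝ E
  have hu' i x : HasFDerivAt (fun y => fderiv ℝ u y (b i))
      ((fderiv ℝ (fderiv ℝ u) x).flip (b i)) x := by
    simpa using ((hu.fderiv_right le_rfl).differentiable one_ne_zero x).hasFDerivAt.clm_apply
      (hasFDerivAt_const (b i) x)
  have h_laplacian x : f x * Δ u x = ∑ i, f x * fderiv ℝ (fderiv ℝ u) x (b i) (b i) := by
    rw [laplacian_eq_sum_fderiv_fderiv b, Finset.mul_sum]
  have h_gradient x : fderiv ℝ f x (∇ u x) = ∑ i, fderiv ℝ f x (b i) * fderiv ℝ u x (b i) := by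
    conv_lhs => rw [← b.sum_repr' (∇ u x)]
    simp [inner_gradient_right, mul_comm]
  have h_parts i : ∫ x, f x * fderiv ℝ (fderiv ℝ u) x (b i) (b i) ∂ν =
      -∫ x, fderiv ℝ f x (b i) * fderiv ℝ u x (b i) ∂ν := by
    simpa [(hu' i _).fderiv] using integral_mul_fderiv_eq_neg_fderiv_mul_of_integrable
      (hf'u' (b i)) (by simpa [(hu' i _).fderiv] using hfu'' (b i)) (hfu' (b i))
      (fun x _ => hf x) (fun x _ => (hu' i x).differentiableAt)
  simp_rw [h_laplacian, h_gradient]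
  rw [integral_finsetSum _ fun i _ => hfu'' (b i), integral_finsetSum _ fun i _ => hf'u' (b i)]
  simp only [h_parts, Finset.sum_neg_distrib]

end IntegrationByParts

section Gradient

variable {E : Type*} [NormedAddCommGroup E] [InnerProductSpace ℝ E] [CompleteSpace E]

lemma norm_gradient_eq_norm_fderiv (u : E → ℝ) (x : E) : ‖∇ u x‖ = ‖fderiv ℝ u x‖ :=
  (toDual ℝ E).symm.norm_map _

lemma fderiv_apply_gradient_self (u : E → ℝ) (x : E) : fderiv ℝ u x (∇ u x) = ‖∇ u x‖ ^ 2 := by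
  rw [← inner_gradient_left, real_inner_self_eq_norm_sq]

lemma contDiff_gradient {u : E → ℝ} {n : WithTop ℕ∞} (hu : ContDiff ℝ (n + 1) u) :
    ContDiff ℝ n (∇ u) :=
  (toDual ℝ E).symm.contDiff.comp (hu.fderiv_right le_rfl)

lemma hasFDerivAt_norm_gradient_sq {u : E → ℝ} {x : E}
    (hu : DifferentiableAt ℝ (fderiv ℝ u) x) :
    HasFDerivAt (fun y => ‖∇ u y‖ ^ 2) ((2 : ℝ) • (fderiv ℝ (fderiv ℝ u) x).flip (∇ u x)) x := by
  have h_gradient := (toDual ℝ E).symm.toContinuousLinearEquiv.hasFDerivAt.comp x hu.hasFDerivAt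
  refine h_gradient.norm_sq.congr_fderiv (ContinuousLinearMap.ext fun v => ?_)
  have h_inner : ⟪∇ u x, (toDual ℝ E).symm (fderiv ℝ (fderiv ℝ u) x v)⟫_ℝ =
      fderiv ℝ (fderiv ℝ u) x v (∇ u x) := by
    rw [real_inner_comm, toDual_symm_apply]
  simpa [gradient] using h_inner

end Gradient

namespace RapidlyDecaying

variable {E : Type*} [NormedAddCommGroup E] [InnerProductSpace ℝ E] [CompleteSpace E] {u : E → ℝ}

lemma norm_gradient_sq (hu' : RapidlyDecaying (fderiv ℝ u)) :
    RapidlyDecaying fun x => ‖∇ u x‖ ^ 2 :=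
  (hu'.norm_mul_norm hu').of_norm_le fun x => by simp [norm_gradient_eq_norm_fderiv, sq]

lemma fderiv_norm_gradient_sq (hu' : RapidlyDecaying (fderiv ℝ u))
    (hu'' : RapidlyDecaying (fderiv ℝ (fderiv ℝ u))) (hu_diff : Differentiable ℝ (fderiv ℝ u)) :
    RapidlyDecaying (fderiv ℝ fun x => ‖∇ u x‖ ^ 2) := by
  refine (hu''.norm_mul_norm hu').of_isBigO (.of_bound 2 (.of_forall fun x => ?_))
  rw [(hasFDerivAt_norm_gradient_sq (hu_diff x)).fderiv]
  simpa [norm_smul, norm_gradient_eq_norm_fderiv] using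
    (fderiv ℝ (fderiv ℝ u) x).flip.le_opNorm (∇ u x)

end RapidlyDecaying

section Identities

variable {E : Type*} [NormedAddCommGroup E] [MeasurableSpace E] [BorelSpace E] {ν : Measure E}

lemma integral_fderiv_apply_self_of_rapidlyDecaying [NormedSpace ℝ E] [FiniteDimensional ℝ E]
    [ν.IsAddHaarMeasure] {F : Type*} [NormedAddCommGroup F] [NormedSpace ℝ F] {f : E → F}
    (hf : ContDiff ℝ 1 f) (hf_decay : RapidlyDecaying f)
    (hf'_decay : RapidlyDecaying (fderiv ℝ f)) :
    ∫ x, fderiv ℝ f x x ∂ν = -(finrank ℝ E : ℝ) • ∫ x, f x ∂ν :=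
  integral_fderiv_apply_self hf (hf_decay.integrable_of_continuous hf.continuous)
    (hf_decay.norm_id_mul_norm.integrable_of_continuous (by fun_prop))
    (hf'_decay.norm_id_mul_norm.integrable_of_continuous (by fun_prop))

variable [InnerProductSpace ℝ E] [FiniteDimensional ℝ E] [ν.IsAddHaarMeasure] {u : E → ℝ}

lemma integral_mul_laplacian_of_rapidlyDecaying {f : E → ℝ} (hf : ContDiff ℝ 1 f)
    (hu : ContDiff ℝ 2 u) (hf_decay : RapidlyDecaying f) (hf'_decay : RapidlyDecaying (fderiv ℝ f))
    (hu'_decay : RapidlyDecaying (fderiv ℝ u))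
    (hu''_decay : RapidlyDecaying (fderiv ℝ (fderiv ℝ u))) :
    ∫ x, f x * Δ u x ∂ν = -∫ x, fderiv ℝ f x (∇ u x) ∂ν := by
  have hu' : ContDiff ℝ 1 (fderiv ℝ u) := hu.fderiv_right le_rfl
  have hf_cont := hf.continuous
  have hu'_cont := hu'.continuous
  refine integral_mul_laplacian (hf.differentiable one_ne_zero) hu (fun v => ?_) (fun v => ?_)
    fun v => ?_
  · exact (hf_decay.mul (hu'_decay.apply v)).integrable_of_continuous (by fun_prop)
  · exact ((hf'_decay.apply v).mul (hu'_decay.apply v)).integrable_of_continuous (by fun_prop)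
  · exact (hf_decay.mul ((hu''_decay.apply v).apply v)).integrable_of_continuous (by fun_prop)

lemma integral_mul_laplacian_self (hu : ContDiff ℝ 2 u) (hu_decay : RapidlyDecaying u)
    (hu'_decay : RapidlyDecaying (fderiv ℝ u))
    (hu''_decay : RapidlyDecaying (fderiv ℝ (fderiv ℝ u))) :
    ∫ x, u x * Δ u x ∂ν = -∫ x, ‖∇ u x‖ ^ 2 ∂ν := by
  simp_rw [integral_mul_laplacian_of_rapidlyDecaying (hu.of_le one_le_two) hu hu_decay hu'_decay
    hu'_decay hu''_decay, fderiv_apply_gradient_self]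

lemma integral_fderiv_apply_self_mul_laplacian (hu : ContDiff ℝ 2 u)
    (hu'_decay : RapidlyDecaying (fderiv ℝ u))
    (hu''_decay : RapidlyDecaying (fderiv ℝ (fderiv ℝ u))) :
    ∫ x, fderiv ℝ u x x * Δ u x ∂ν = (finrank ℝ E / 2 - 1) * ∫ x, ‖∇ u x‖ ^ 2 ∂ν := by
  have hu' : ContDiff ℝ 1 (fderiv ℝ u) := hu.fderiv_right le_rfl
  have hu'_diff : Differentiable ℝ (fderiv ℝ u) := hu'.differentiable one_ne_zero
  have h_sq : ContDiff ℝ 1 fun x => ‖∇ u x‖ ^ 2 := (contDiff_gradient hu).norm_sq ℝ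
  have h_sq_decay := hu'_decay.norm_gradient_sq
  have h_sq'_decay := hu'_decay.fderiv_norm_gradient_sq hu''_decay hu'_diff
  have h_pointwise x : fderiv ℝ (fun y => fderiv ℝ u y y) x (∇ u x) =
      ‖∇ u x‖ ^ 2 + 2⁻¹ * fderiv ℝ (fun y => ‖∇ u y‖ ^ 2) x x := by
    have h_symm : fderiv ℝ (fderiv ℝ u) x (∇ u x) x = fderiv ℝ (fderiv ℝ u) x x (∇ u x) :=
      hu.contDiffAt.isSymmSndFDerivAt (by simp) _ _
    simp [(hasFDerivAt_apply_self (hu'_diff x)).fderiv,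
      (hasFDerivAt_norm_gradient_sq (hu'_diff x)).fderiv, fderiv_apply_gradient_self, h_symm]
  have h_sq'_cont := h_sq.continuous_fderiv one_ne_zero
  calc ∫ x, fderiv ℝ u x x * Δ u x ∂ν
      = -∫ x, fderiv ℝ (fun y => fderiv ℝ u y y) x (∇ u x) ∂ν :=
        integral_mul_laplacian_of_rapidlyDecaying (hu'.clm_apply contDiff_id) hu
          hu'_decay.apply_self (hu'_decay.fderiv_apply_self hu''_decay hu'_diff)
          hu'_decay hu''_decay
    _ = -(∫ x, ‖∇ u x‖ ^ 2 ∂ν + 2⁻¹ * ∫ x, fderiv ℝ (fun y => ‖∇ u y‖ ^ 2) x x ∂ν) := by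
        simp_rw [h_pointwise]
        rw [integral_add (h_sq_decay.integrable_of_continuous h_sq.continuous)
          ((h_sq'_decay.apply_self.integrable_of_continuous (by fun_prop)).const_mul _),
          integral_const_mul]
    _ = (finrank ℝ E / 2 - 1) * ∫ x, ‖∇ u x‖ ^ 2 ∂ν := by
        rw [integral_fderiv_apply_self_of_rapidlyDecaying h_sq h_sq_decay h_sq'_decay, smul_eq_mul]
        ring

theorem pohozaev_identity_semilinear (hu : ContDiff ℝ 2 u) (hu_decay : RapidlyDecaying u)
    (hu'_decay : RapidlyDecaying (fderiv ℝ u))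
    (hu''_decay : RapidlyDecaying (fderiv ℝ (fderiv ℝ u))) {G : ℝ → ℝ} (hG : ContDiff ℝ 1 G)
    (hG0 : G 0 = 0) (heq : ∀ x, -Δ u x = deriv G (u x)) :
    (finrank ℝ E - 2) * ∫ x, deriv G (u x) * u x ∂ν = 2 * finrank ℝ E * ∫ x, G (u x) ∂ν := by
  have hG_diff : Differentiable ℝ G := hG.differentiable one_ne_zero
  have hu_diff : Differentiable ℝ u := hu.differentiable two_ne_zero
  have h_energy : ∫ x, deriv G (u x) * u x ∂ν = ∫ x, ‖∇ u x‖ ^ 2 ∂ν := by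
    simp_rw [← heq, neg_mul, mul_comm (Δ u _), integral_neg,
      integral_mul_laplacian_self hu hu_decay hu'_decay hu''_decay, neg_neg]
  have h_chain x : fderiv ℝ (G ∘ u) x x = -(fderiv ℝ u x x * Δ u x) := by
    rw [((hG_diff (u x)).hasDerivAt.comp_hasFDerivAt x (hu_diff x).hasFDerivAt).fderiv, ← heq]
    simp [mul_comm]
  have h_virial : (finrank ℝ E : ℝ) * ∫ x, G (u x) ∂ν =
      (finrank ℝ E / 2 - 1) * ∫ x, ‖∇ u x‖ ^ 2 ∂ν := by
    have h_euler := integral_fderiv_apply_self_of_rapidlyDecaying (ν := ν)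
      (hG.comp (hu.of_le one_le_two)) (hu_decay.comp_left (hG_diff 0) hG0)
      (hu_decay.fderiv_comp_left hu'_decay hG hu_diff)
    simp_rw [h_chain, integral_neg,
      integral_fderiv_apply_self_mul_laplacian hu hu'_decay hu''_decay] at h_euler
    simpa using h_euler.symm
  rw [h_energy]
  linear_combination -2 * h_virial

theorem pohozaev_identity_general (hu : ContDiff ℝ 2 u) (hu_decay : RapidlyDecaying u)
    (hu'_decay : RapidlyDecaying (fderiv ℝ u))
    (hu''_decay : RapidlyDecaying (fderiv ℝ (fderiv ℝ u))) {lam μ : ℝ}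
    (heq : ∀ x, -Δ u x + lam * u x = μ * u x ^ 3) :
    lam * ∫ x, u x ^ 2 ∂ν = (4 - finrank ℝ E) / 4 * μ * ∫ x, u x ^ 4 ∂ν := by
  have h_int_pow {n : ℕ} (hn : n ≠ 0) (c : ℝ) : Integrable (fun x => c * u x ^ n) ν :=
    ((hu_decay.comp_left (φ := fun t => t ^ n) (by fun_prop) (zero_pow hn)).integrable_of_continuous
      (hu.continuous.pow n)).const_mul c
  have h_int_sub (a b : ℝ) : ∫ x, (a * u x ^ 4 - b * u x ^ 2) ∂ν =
      a * ∫ x, u x ^ 4 ∂ν - b * ∫ x, u x ^ 2 ∂ν := by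
    rw [integral_sub (h_int_pow four_ne_zero a) (h_int_pow two_ne_zero b), integral_const_mul,
      integral_const_mul]
  let G (t : ℝ) : ℝ := μ / 4 * t ^ 4 - lam / 2 * t ^ 2
  have hG' t : deriv G t = μ * t ^ 3 - lam * t := by
    have hG : HasDerivAt G _ t :=
      ((hasDerivAt_pow 4 t).const_mul (μ / 4)).sub ((hasDerivAt_pow 2 t).const_mul (lam / 2))
    exact hG.deriv.trans (by norm_num; ring)
  have h_mul t : deriv G t * t = μ * t ^ 4 - lam * t ^ 2 := by rw [hG']; ring
  have h := pohozaev_identity_semilinear (ν := ν) hu hu_decay hu'_decay hu''_decay (G := G)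
    (by fun_prop) (by simp [G]) fun x => by rw [hG']; linear_combination heq x
  simp_rw [h_mul, G, h_int_sub] at h
  linear_combination 2⁻¹ * h

end Identities

lemma lap_eq_laplacian {N : ℕ} (w : EuclideanSpace ℝ (Fin N) → ℝ) : lap w = Δ w := by
  ext x
  simp [lap, laplacian_eq_iteratedFDeriv_orthonormalBasis w (EuclideanSpace.basisFun (Fin N) ℝ)]

end

theorem pohozaev_identity
    (N : ℕ) (hN : N = 1 ∨ N = 2 ∨ N = 3)
    (lam μ : ℝ) (hlam : 0 < lam) (hμ : 0 < μ)
    (w : EuclideanSpace ℝ (Fin N) → ℝ)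
    (hpos : ∀ x, 0 < w x) (hsmooth : ContDiff ℝ 2 w)
    (heq : ∀ x, -lap w x + lam * w x = μ * (w x) ^ 3)
    (hdecay : ∃ C δ : ℝ, 0 < C ∧ 0 < δ ∧ ∀ x,
      w x + ‖fderiv ℝ w x‖ + ‖iteratedFDeriv ℝ 2 w x‖ ≤ C * Real.exp (-δ * ‖x‖)) :
    lam * (∫ x, (w x) ^ 2) = ((4 - (N : ℝ)) / 4) * μ * ∫ x, (w x) ^ 4 := by
  obtain ⟨C, δ, -, hδ, h_exp⟩ := hdecay
  obtain ⟨hw, hw', hw''⟩ := RapidlyDecaying.of_derivatives_le_exp (f := w) hδ fun x => by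
    simpa only [Real.norm_of_nonneg (hpos x).le] using h_exp x
  simpa using pohozaev_identity_general (ν := volume) hsmooth hw hw' hw'' fun x => by
    simpa only [lap_eq_laplacian] using heq x
end
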